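/- Let S be a semitopological semigroup that has property (G): every Q-nonexpansive dynamical system (S,(K,weak)), where K is a weakly compact convex subset of a Hausdorff locally convex space whose topology is determined by a family Q of seminorms, has a point x ∈ K with sx = x for all s ∈ S. Then for every such Q-nonexpansive dynamical system (S,(K,weak)) on a weakly compact convex set K, the fixed point set F(S) = {x ∈ K : sx = x for every s ∈ S} is a Q-nonexpansive retract of K, i.e., there exists a map r: K → K with r(K) ⊆ F(S), r ∘ r = r, r(x) = x for x ∈ F(S), and p(r(x) − r(y)) ≤ p(x − y) for all p ∈ Q and x, y ∈ K. -/

import Mathlib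

open Set MeasureTheory BoundedContinuousFunction

noncomputable section

universe u v

/-- The weak topology on a topological module `X` over `𝕜`: the coarsest topology making all
continuous linear functionals continuous. -/
def weakTop (𝕜 : Type*) (X : Type*) [NontriviallyNormedField 𝕜] [AddCommGroup X]
    [Module 𝕜 X] [TopologicalSpace X] : TopologicalSpace X :=
  ⨅ f : X →L[𝕜] 𝕜, TopologicalSpace.induced (⇑f) inferInstance

/-- A semitopological semigroup: multiplication is separately continuous. -/
def IsSemitopologicalSemigroup (S : Type*) [Semigroup S] [TopologicalSpace S] : Prop :=
  (∀ t : S, Continuous fun s => t * s) ∧ (∀ t : S, Continuous fun s => s * t)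


/-- Property (G): every `Q`-nonexpansive dynamical system `(S,(K,weak))` on a nonempty weakly
compact convex subset of a Hausdorff locally convex space has a common fixed point. -/
def PropertyG (S : Type u) [Semigroup S] [TopologicalSpace S] : Prop :=
  ∀ (X : Type v) [AddCommGroup X] [Module ℝ X] [TopologicalSpace X] [T2Space X]
    (ι : Type v) [Nonempty ι] (Q : SeminormFamily ℝ X ι), WithSeminorms Q →
    ∀ (K : Set X) (π : S → X → X),
      K.Nonempty → Convex ℝ K → @IsCompact X (weakTop ℝ X) K →
      (∀ s : S, MapsTo (π s) K K) →
      (∀ s t : S, ∀ x ∈ K, π (s * t) x = π s (π t x)) →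
      (∀ x ∈ K, @Continuous S X _ (weakTop ℝ X) fun s => π s x) →
      (∀ s : S, @ContinuousOn X X (weakTop ℝ X) (weakTop ℝ X) (π s) K) →
      (∀ (i : ι) (s : S), ∀ x ∈ K, ∀ y ∈ K, Q i (π s x - π s y) ≤ Q i (x - y)) →
      ∃ x ∈ K, ∀ s : S, π s x = x

/-!
Let `S` act pointwise on the product `X ^ K`. The weak topology of a product is the product of the
weak topologies, so by Tychonoff `K ^ K` is weakly compact. The nonexpansive maps `K → K` fixing
`F(S)` pointwise form a convex closed, hence weakly closed, `S`-invariant subset of it, nonempty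
because it contains the inclusion. A common fixed point of `S` there, provided by property (G), is
a map all of whose values lie in `F(S)`, i.e. the desired retraction.
-/

section WeakTopology

open Topology

section Functionals

variable {𝕜 X Y : Type*} [NontriviallyNormedField 𝕜] [AddCommGroup X] [Module 𝕜 X]
  [TopologicalSpace X]

lemma continuous_weakTop_rng [TopologicalSpace Y] {g : Y → X} :
    Continuous[_, weakTop 𝕜 X] g ↔ ∀ φ : X →L[𝕜] 𝕜, Continuous fun y => φ (g y) :=
  continuous_iInf_rng.trans <| forall_congr' fun _ => continuous_induced_rng

lemma continuous_weakTop_dom (φ : X →L[𝕜] 𝕜) : Continuous[weakTop 𝕜 X, _] φ :=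
  continuous_iInf_dom continuous_induced_dom

lemma weakTop_eq_weakSpace :
    weakTop 𝕜 X = (inferInstance : TopologicalSpace (WeakSpace 𝕜 X)) := by
  refine Eq.symm <| induced_iInf.trans <| iInf_congr fun φ => ?_
  exact induced_compose

end Functionals

lemma isClosed_weakTop_of_convex {𝕜 X : Type*} [RCLike 𝕜] [AddCommGroup X] [Module 𝕜 X]
    [Module ℝ X] [IsScalarTower ℝ 𝕜 X] [TopologicalSpace X] [IsTopologicalAddGroup X]
    [ContinuousSMul 𝕜 X] [LocallyConvexSpace ℝ X] {C : Set X} (hconv : Convex ℝ C)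
    (hclosed : IsClosed C) : IsClosed[weakTop 𝕜 X] C := by
  rw [weakTop_eq_weakSpace]
  have himage : IsClosed (toWeakSpace 𝕜 X '' C) := by
    rw [← closure_eq_iff_isClosed, ← hconv.toWeakSpace_closure 𝕜, hclosed.closure_eq]
  exact image_id C ▸ himage

section Product

variable {𝕜 A : Type*} {X : A → Type*} [∀ a, AddCommGroup (X a)] [∀ a, TopologicalSpace (X a)]

lemma exists_finset_forall_eq_zero_of_continuousLinearMap_pi [NormedField 𝕜]
    [∀ a, Module 𝕜 (X a)] (φ : (∀ a, X a) →L[𝕜] 𝕜) :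
    ∃ T : Finset A, ∀ f : ∀ a, X a, (∀ a ∈ T, f a = 0) → φ f = 0 := by
  have hball : φ ⁻¹' Metric.ball 0 1 ∈ 𝓝 (0 : ∀ a, X a) :=
    φ.continuous.continuousAt.preimage_mem_nhds <| by
      simpa only [map_zero] using Metric.ball_mem_nhds (0 : 𝕜) one_pos
  rw [nhds_pi, Filter.mem_pi] at hball
  obtain ⟨T, hT, U, hU, hsub⟩ := hball
  refine ⟨hT.toFinset, fun f hf => by_contra fun hφ => ?_⟩
  -- The cylinder contains the whole line through `f`, on which `φ` is unbounded unless `φ f = 0`.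
  have hmem : (φ f)⁻¹ • f ∈ T.pi U := fun a ha => by
    simpa [hf a (hT.mem_toFinset.mpr ha)] using mem_of_mem_nhds (hU a)
  have hlt : ‖φ ((φ f)⁻¹ • f)‖ < 1 := by simpa using hsub hmem
  simp [hφ] at hlt

lemma exists_finset_continuousLinearMap_pi_eq_sum [NormedField 𝕜] [∀ a, Module 𝕜 (X a)]
    [DecidableEq A] (φ : (∀ a, X a) →L[𝕜] 𝕜) :
    ∃ T : Finset A, ∀ f : ∀ a, X a, φ f = ∑ a ∈ T, φ (Pi.single a (f a)) := by
  obtain ⟨T, hT⟩ := exists_finset_forall_eq_zero_of_continuousLinearMap_pi φ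
  refine ⟨T, fun f => ?_⟩
  have hzero : φ (f - ∑ a ∈ T, Pi.single a (f a)) = 0 :=
    hT _ fun b hb => by simp [Finset.sum_apply, Finset.sum_pi_single, hb]
  rwa [map_sub, map_sum, sub_eq_zero] at hzero

variable [NontriviallyNormedField 𝕜] [∀ a, Module 𝕜 (X a)]

lemma weakTop_pi :
    weakTop 𝕜 (∀ a, X a) = @Pi.topologicalSpace A X fun a => weakTop 𝕜 (X a) := by
  classical
  refine le_antisymm (le_iInf fun a => ?_) (le_iInf fun φ => ?_)
  · rw [← continuous_iff_le_induced, @continuous_weakTop_rng 𝕜 _ _ _ _ _ _ (weakTop 𝕜 _)]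
    exact fun φ => continuous_weakTop_dom (φ.comp (ContinuousLinearMap.proj a))
  · rw [← continuous_iff_le_induced]
    obtain ⟨T, hT⟩ := exists_finset_continuousLinearMap_pi_eq_sum φ
    rw [funext hT]
    have hsingle (a : A) : Continuous[weakTop 𝕜 (X a), _] fun x => φ (Pi.single a x) :=
      continuous_weakTop_dom (φ.comp (ContinuousLinearMap.single 𝕜 X a))
    let : ∀ a, TopologicalSpace (X a) := fun a => weakTop 𝕜 (X a)
    exact continuous_finsetSum T fun a _ => (hsingle a).comp (continuous_apply a)

lemma isCompact_weakTop_univ_pi {K : ∀ a, Set (X a)}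
    (hK : ∀ a, @IsCompact _ (weakTop 𝕜 (X a)) (K a)) :
    @IsCompact _ (weakTop 𝕜 (∀ a, X a)) (univ.pi K) := by
  rw [weakTop_pi]
  exact @isCompact_univ_pi _ _ (fun a => weakTop 𝕜 (X a)) _ hK

end Product

end WeakTopology

section NonexpansiveSystem

variable {S : Type*} [Semigroup S] [TopologicalSpace S]
  {X : Type*} [AddCommGroup X] [Module ℝ X] [TopologicalSpace X]
  {A ι : Type*}

/-- `π` is a `Q`-nonexpansive dynamical system `(S,(K,weak))`: a separately weakly continuous
action of `S` on `K` by maps that are nonexpansive for every seminorm of `Q`. As in `PropertyG`, the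
action is given by self-maps of `X`, whose values outside `K` are irrelevant. -/
structure IsNonexpansiveSystem (Q : SeminormFamily ℝ X ι) (K : Set X) (π : S → X → X) : Prop where
  mapsTo : ∀ s, MapsTo (π s) K K
  mul_apply : ∀ s t, ∀ x ∈ K, π (s * t) x = π s (π t x)
  continuous_orbit : ∀ x ∈ K, @Continuous S X _ (weakTop ℝ X) fun s => π s x
  continuousOn : ∀ s, @ContinuousOn X X (weakTop ℝ X) (weakTop ℝ X) (π s) K
  nonexpansive : ∀ i s, ∀ x ∈ K, ∀ y ∈ K, Q i (π s x - π s y) ≤ Q i (x - y)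

/-- The family of seminorms `f ↦ Q i (f a)` on the power `A → X`, indexed by the pairs `(a, i)`;
it determines the product topology when `Q` determines the topology of `X`. -/
abbrev powerSeminormFamily (A : Type*) (Q : SeminormFamily ℝ X ι) :
    SeminormFamily ℝ (A → X) (Σ _ : A, ι) :=
  SeminormFamily.sigma fun a => Q.comp (LinearMap.proj a)

lemma IsNonexpansiveSystem.power {Q : SeminormFamily ℝ X ι} {K : Set X} {π : S → X → X}
    (h : IsNonexpansiveSystem Q K π) {R : Set (A → X)} (hRK : R ⊆ univ.pi fun _ => K)
    (hR : ∀ s, MapsTo (fun f a => π s (f a)) R R) :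
    IsNonexpansiveSystem (powerSeminormFamily A Q) R fun s f a => π s (f a) where
  mapsTo := hR
  mul_apply s t f hf := funext fun a => h.mul_apply s t _ (hRK hf a trivial)
  continuous_orbit f hf := by
    rw [weakTop_pi]
    exact (@continuous_pi_iff _ _ _ _ (fun _ => weakTop ℝ X) _).mpr
      fun a => h.continuous_orbit _ (hRK hf a trivial)
  continuousOn s := by
    rw [weakTop_pi]
    have hs := h.continuousOn s
    let := weakTop ℝ X
    exact continuousOn_pi.mpr fun a =>
      hs.comp (continuous_apply a).continuousOn fun f hf => hRK hf a trivial
  nonexpansive i s f hf g hg :=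
    h.nonexpansive i.2 s _ (hRK hf i.1 trivial) _ (hRK hg i.1 trivial)

end NonexpansiveSystem

section NonexpansiveMaps

variable {X ι : Type*} [AddCommGroup X] [Module ℝ X] {Q : SeminormFamily ℝ X ι} {K F : Set X}

/-- The `Q`-nonexpansive maps `K → X` that fix every point of `K ∩ F`. With `F` the fixed point
set of an action on `K`, the nonexpansive retractions onto `F` are found among them. -/
def nonexpansiveMapsFixing (Q : SeminormFamily ℝ X ι) (K F : Set X) : Set (K → X) :=
  {f | (∀ a : K, (a : X) ∈ F → f a = a) ∧ ∀ i (a b : K), Q i (f a - f b) ≤ Q i (a - b)}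

lemma nonexpansiveMapsFixing_eq_iInter : nonexpansiveMapsFixing Q K F =
    (⋂ (a : K) (_ : (a : X) ∈ F), {f : K → X | f a = a}) ∩
      ⋂ (i) (a : K) (b : K), {f | Q i (f a - f b) ≤ Q i (a - b)} := by
  ext f
  simp only [nonexpansiveMapsFixing, mem_inter_iff, mem_iInter, mem_ofPred_eq]

lemma convex_nonexpansiveMapsFixing : Convex ℝ (nonexpansiveMapsFixing Q K F) := by
  rw [nonexpansiveMapsFixing_eq_iInter]
  refine (convex_iInter₂ fun a _ => ?_).inter
    (convex_iInter fun i => convex_iInter₂ fun a b => ?_)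
  · exact (convex_singleton (a : X)).linear_preimage (LinearMap.proj (φ := fun _ : K => X) a)
  · have hconvexOn : ConvexOn ℝ univ fun f : K → X => Q i (f a - f b) :=
      ((Q i).comp ((LinearMap.proj a : (K → X) →ₗ[ℝ] X) - LinearMap.proj b)).convexOn
    simpa only [mem_univ, true_and] using hconvexOn.convex_le (Q i (a - b))

lemma isClosed_nonexpansiveMapsFixing [TopologicalSpace X] [T2Space X] (hQ : WithSeminorms Q) :
    IsClosed (nonexpansiveMapsFixing Q K F) := by
  have := hQ.topologicalAddGroup
  rw [nonexpansiveMapsFixing_eq_iInter]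
  refine (isClosed_biInter fun a _ => isClosed_eq (continuous_apply a) continuous_const).inter
    (isClosed_iInter fun i => isClosed_iInter fun a => isClosed_iInter fun b => ?_)
  exact isClosed_le
    ((hQ.continuous_seminorm i).comp ((continuous_apply a).sub (continuous_apply b)))
    continuous_const

lemma isCompact_weakTop_univ_pi_inter_nonexpansiveMapsFixing [TopologicalSpace X] [T2Space X]
    (hQ : WithSeminorms Q) (hK : @IsCompact X (weakTop ℝ X) K) :
    @IsCompact (K → X) (weakTop ℝ (K → X))
      (univ.pi (fun _ => K) ∩ nonexpansiveMapsFixing Q K F) := by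
  have := hQ.topologicalAddGroup
  have := hQ.continuousSMul
  have := (withSeminorms_pi fun _ : K => hQ).toLocallyConvexSpace
  exact @IsCompact.inter_right _ (weakTop ℝ (K → X)) _ _ (isCompact_weakTop_univ_pi fun _ => hK)
    (isClosed_weakTop_of_convex convex_nonexpansiveMapsFixing
      (isClosed_nonexpansiveMapsFixing hQ))

lemma IsNonexpansiveSystem.mapsTo_nonexpansiveMapsFixing {S : Type*} [Semigroup S]
    [TopologicalSpace S] [TopologicalSpace X] {π : S → X → X} (h : IsNonexpansiveSystem Q K π)
    (s : S) :
    MapsTo (fun f a => π s (f a))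
      (univ.pi (fun _ => K) ∩ nonexpansiveMapsFixing Q K {x | ∀ s, π s x = x})
      (univ.pi (fun _ => K) ∩ nonexpansiveMapsFixing Q K {x | ∀ s, π s x = x}) := by
  rintro f ⟨hfK, hfix, hne⟩
  refine ⟨fun a _ => h.mapsTo s (hfK a trivial), fun a ha => ?_, fun i a b => ?_⟩
  · exact (congrArg (π s) (hfix a ha)).trans (ha s)
  · exact (h.nonexpansive i s _ (hfK a trivial) _ (hfK b trivial)).trans (hne i a b)

end NonexpansiveMaps

section Retraction

variable {S : Type u} [Semigroup S] [TopologicalSpace S]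
  {X : Type v} [AddCommGroup X] [Module ℝ X] [TopologicalSpace X] [T2Space X]
  {ι : Type v} [Nonempty ι] {Q : SeminormFamily ℝ X ι} {K : Set X} {π : S → X → X}

lemma PropertyG.exists_mem_nonexpansiveMapsFixing (hG : PropertyG.{u, v} S) (hQ : WithSeminorms Q)
    (hKne : K.Nonempty) (hKcv : Convex ℝ K) (hKcpt : @IsCompact X (weakTop ℝ X) K)
    (hπ : IsNonexpansiveSystem Q K π) :
    ∃ f ∈ nonexpansiveMapsFixing Q K {x | ∀ s, π s x = x},
      ∀ a, f a ∈ K ∧ ∀ s, π s (f a) = f a := by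
  have : Nonempty (Σ _ : K, ι) := ⟨⟨hKne.some, hKne.some_mem⟩, Classical.arbitrary ι⟩
  let R : Set (K → X) := univ.pi (fun _ => K) ∩ nonexpansiveMapsFixing Q K {x | ∀ s, π s x = x}
  have hRne : R.Nonempty := ⟨Subtype.val, fun a _ => a.2, fun _ _ => rfl, fun _ _ _ => le_rfl⟩
  have hRcv : Convex ℝ R := (convex_pi fun _ _ => hKcv).inter convex_nonexpansiveMapsFixing
  have hsys : IsNonexpansiveSystem (powerSeminormFamily K Q) R fun s f a => π s (f a) :=
    hπ.power inter_subset_left hπ.mapsTo_nonexpansiveMapsFixing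
  obtain ⟨f, ⟨hfK, hf⟩, hfix⟩ := hG (K → X) (Σ _ : K, ι) (powerSeminormFamily K Q)
    (withSeminorms_pi fun _ => hQ) R _ hRne hRcv
    (isCompact_weakTop_univ_pi_inter_nonexpansiveMapsFixing hQ hKcpt)
    hsys.mapsTo hsys.mul_apply hsys.continuous_orbit hsys.continuousOn hsys.nonexpansive
  exact ⟨f, hf, fun a => ⟨hfK a trivial, fun s => congrFun (hfix s) a⟩⟩

theorem fixedPointSet_nonexpansive_retract_of_propertyG_general (hG : PropertyG.{u, v} S)
    (hQ : WithSeminorms Q) (hKne : K.Nonempty) (hKcv : Convex ℝ K)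
    (hKcpt : @IsCompact X (weakTop ℝ X) K) (hπ : IsNonexpansiveSystem Q K π) :
    ∃ r : X → X,
      (∀ x ∈ K, r x ∈ K ∧ ∀ s : S, π s (r x) = r x) ∧
      (∀ x ∈ K, r (r x) = r x) ∧
      (∀ x ∈ K, (∀ s : S, π s x = x) → r x = x) ∧
      (∀ i : ι, ∀ x ∈ K, ∀ y ∈ K, Q i (r x - r y) ≤ Q i (x - y)) := by
  obtain ⟨f, ⟨hfix, hne⟩, hf⟩ := hG.exists_mem_nonexpansiveMapsFixing hQ hKne hKcv hKcpt hπ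
  let r : X → X := Function.extend Subtype.val f id
  have hr (a : K) : r a = f a := Subtype.val_injective.extend_apply f id a
  have hr_fixed : ∀ x ∈ K, (∀ s, π s x = x) → r x = x := fun x hx hxs =>
    (hr ⟨x, hx⟩).trans (hfix ⟨x, hx⟩ hxs)
  have hr_mem : ∀ x ∈ K, r x ∈ K ∧ ∀ s, π s (r x) = r x := fun x hx => by
    simpa only [hr ⟨x, hx⟩] using hf ⟨x, hx⟩
  refine ⟨r, hr_mem, fun x hx => hr_fixed _ (hr_mem x hx).1 (hr_mem x hx).2, hr_fixed, ?_⟩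
  intro i x hx y hy
  simpa only [hr ⟨x, hx⟩, hr ⟨y, hy⟩] using hne i ⟨x, hx⟩ ⟨y, hy⟩

end Retraction

/-- **Theorem (q)**: if `S` has property (G), then for every `Q`-nonexpansive dynamical system
`(S,(K,weak))` on a nonempty weakly compact convex set the fixed point set
`F(S) = {x ∈ K : s x = x for all s ∈ S}` is a `Q`-nonexpansive retract of `K`. -/
theorem fixedPointSet_nonexpansive_retract_of_propertyG
    {S : Type u} [Semigroup S] [TopologicalSpace S] [T2Space S]
    (hS : IsSemitopologicalSemigroup S)
    (hG : PropertyG.{u, v} S)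
    {X : Type v} [AddCommGroup X] [Module ℝ X] [TopologicalSpace X] [T2Space X]
    {ι : Type v} [Nonempty ι] (Q : SeminormFamily ℝ X ι) (hQ : WithSeminorms Q)
    (K : Set X) (π : S → X → X)
    (hKne : K.Nonempty) (hKcv : Convex ℝ K) (hKcpt : @IsCompact X (weakTop ℝ X) K)
    (hinv : ∀ s : S, MapsTo (π s) K K)
    (hact : ∀ s t : S, ∀ x ∈ K, π (s * t) x = π s (π t x))
    (horb : ∀ x ∈ K, @Continuous S X _ (weakTop ℝ X) fun s => π s x)
    (htra : ∀ s : S, @ContinuousOn X X (weakTop ℝ X) (weakTop ℝ X) (π s) K)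
    (hne : ∀ (i : ι) (s : S), ∀ x ∈ K, ∀ y ∈ K, Q i (π s x - π s y) ≤ Q i (x - y)) :
    ∃ r : X → X,
      -- `r` maps `K` into the fixed point set `F(S)`
      (∀ x ∈ K, r x ∈ K ∧ ∀ s : S, π s (r x) = r x) ∧
      -- `r` is a retraction
      (∀ x ∈ K, r (r x) = r x) ∧
      (∀ x ∈ K, (∀ s : S, π s x = x) → r x = x) ∧
      -- `r` is `Q`-nonexpansive
      (∀ i : ι, ∀ x ∈ K, ∀ y ∈ K, Q i (r x - r y) ≤ Q i (x - y)) :=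
  fixedPointSet_nonexpansive_retract_of_propertyG_general hG hQ hKne hKcv hKcpt
    ⟨hinv, hact, horb, htra, hne⟩
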